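/- Let d ≥ 1, let h : [0,1] → ℝ^d be a càdlàg function of bounded variation with pointwise total variation V := sup over partitions 0 = s₀ < s₁ < ⋯ < s_k = 1 of Σ_i |h(s_i) − h(s_{i−1})| (Euclidean norms), and let g : [0,1] → ℝ^d be any càdlàg function. Let r := ρ₂(g, h) be the Hausdorff distance between the completed graphs Γg and Γh. Then ∫₀¹ |g(s) − h(s)| ds ≤ 2·d·(V + 1)·r + π·d·r². -/

import Mathlib

/-!
The proof is a one-dimensional estimate that needs no area of a tube around `Γh`. Write `W s` for
the variation of `h` on `[0,1] ∩ (-∞, s]`, a monotone function on `ℝ` with values in `[0, V]`.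
For `r' > r`, the point `(s, g s)` is within `r'` of some `(t, x) ∈ Γh`. Then `|t - s| < r'`, and
since `x` is a convex combination of `h(t)` and of a limit of values `h(u)` with `u` close to `t`,
`|x - h s|` is at most the variation of `h` near `s`, that is
`|g s - h s| ≤ r' + W (s + r') - W (s - r')` (`norm_sub_le_of_hausdorffDist_lt`).
Integrating over `[0,1]`, the shifted integrals of `W` telescope to an integral over an interval of
length `2 r'` near `1` minus one near `0`, hence contribute at most `2 r' V`
(`integral_shift_sub_le`). Letting `r'` decrease to `r` gives the dimension-free bound
`∫ |g - h| ≤ (1 + 2 V) r`, which is stronger than the stated one.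

The real-valued Hausdorff distance is meaningful because càdlàg functions on `[0,1]` are bounded,
so that the completed graphs are bounded (`isBounded_cGraph`).
-/


open Set Filter Topology Metric MeasureTheory

noncomputable section

/-- `h` is càdlàg on `[0,1]`: right-continuous on `[0,1)` and with left limits on `(0,1]`. -/
def Cadlag01 {E : Type*} [TopologicalSpace E] (h : ℝ → E) : Prop :=
  (∀ t ∈ Ico (0:ℝ) 1, Tendsto h (nhdsWithin t (Ioi t)) (nhds (h t))) ∧
  ∀ t ∈ Ioc (0:ℝ) 1, ∃ L, Tendsto h (nhdsWithin t (Iio t)) (nhds L)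

/-- The left limit of `h` at `t`, with the convention `h(0-) := h(0)`. -/
def leftLimAt {E : Type*} [TopologicalSpace E] (h : ℝ → E) (t : ℝ) : E :=
  if t = 0 then h 0 else Function.leftLim h t

/-- A point `(t, x)` of `[0,1] × ℝ^d`, regarded as an element of the Euclidean space
`ℝ^{1+d}` (the `L²`-product). -/
def gPoint {d : ℕ} (t : ℝ) (x : EuclideanSpace ℝ (Fin d)) :
    WithLp 2 (ℝ × EuclideanSpace ℝ (Fin d)) :=
  (WithLp.equiv 2 (ℝ × EuclideanSpace ℝ (Fin d))).symm (t, x)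

/-- The completed graph of `h` : all points `(t, x)` with `t ∈ [0,1]` and `x` on the segment
joining `h(t-)` and `h(t)`. -/
def cGraph {d : ℕ} (h : ℝ → EuclideanSpace ℝ (Fin d)) :
    Set (WithLp 2 (ℝ × EuclideanSpace ℝ (Fin d))) :=
  {p | ∃ t ∈ Icc (0:ℝ) 1, ∃ x ∈ segment ℝ (leftLimAt h t) (h t), p = gPoint t x}

/-- A closed ball containing all values of `h` near `t` contains the vertical segment of the
completed graph over `t`. -/
lemma segment_subset_closedBall {d : ℕ} {h : ℝ → EuclideanSpace ℝ (Fin d)} (hc : Cadlag01 h)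
    {a b t R : ℝ} {c x : EuclideanSpace ℝ (Fin d)} (ht : t ∈ Icc (0:ℝ) 1) (hab : t ∈ Ioo a b)
    (H : ∀ u ∈ Icc (0:ℝ) 1, u ∈ Ioo a b → h u ∈ closedBall c R)
    (hx : x ∈ segment ℝ (leftLimAt h t) (h t)) : x ∈ closedBall c R := by
  refine (convex_closedBall c R).segment_subset ?_ (H t ht hab) hx
  unfold leftLimAt
  split_ifs with h0
  · exact h0 ▸ H t ht hab
  have ht0 : 0 < t := lt_of_le_of_ne ht.1 (Ne.symm h0)
  refine isClosed_closedBall.mem_of_tendsto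
    (tendsto_leftLim_of_tendsto (hc.2 t ⟨ht0, ht.2⟩)) ?_
  filter_upwards [Ioo_mem_nhdsLT (max_lt hab.1 ht0)] with u hu
  have h1 := max_lt_iff.1 hu.1
  exact H u ⟨h1.2.le, hu.2.le.trans ht.2⟩ ⟨h1.1, hu.2.trans hab.2⟩

/-- Each point of `[0,1]` has a relative neighbourhood on which `h` is bounded, by the existence of
one-sided limits, and `[0,1]` is compact. -/
lemma Cadlag01.exists_bound {d : ℕ} {h : ℝ → EuclideanSpace ℝ (Fin d)} (hc : Cadlag01 h) :
    ∃ R, ∀ t ∈ Icc (0:ℝ) 1, h t ∈ closedBall (0 : EuclideanSpace ℝ (Fin d)) R := by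
  have hb : Bornology.IsBounded (h '' Icc (0:ℝ) 1) := by
    refine isCompact_Icc.induction_on (p := fun s => Bornology.IsBounded (h '' s)) (by simp)
      (fun s t hst ht => ht.subset (image_mono hst))
      (fun s t hs ht => by rw [image_union]; exact hs.union ht) ?_
    intro t ht
    have key : ∀ {l : Filter ℝ} {L : EuclideanSpace ℝ (Fin d)}, Tendsto h l (𝓝 L) →
        ∃ s ∈ l, Bornology.IsBounded (h '' s) := fun {l L} hl =>
      ⟨h ⁻¹' ball L 1, hl (ball_mem_nhds L one_pos), isBounded_ball.subset (image_preimage_subset _ _)⟩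
    obtain ⟨A, hA, hAb⟩ : ∃ s ∈ 𝓝[Icc (0:ℝ) 1 ∩ Iio t] t, Bornology.IsBounded (h '' s) := by
      rcases ht.1.eq_or_lt with h0 | h0
      · refine ⟨∅, ?_, by simp⟩
        have : Icc (0:ℝ) 1 ∩ Iio t = ∅ := by
          ext u
          simp only [mem_inter_iff, mem_Icc, mem_Iio, mem_empty_iff_false, iff_false]
          intro hu
          linarith [hu.1.1, hu.2]
        simp [this]
      · obtain ⟨L, hL⟩ := hc.2 t ⟨h0, ht.2⟩
        exact key (hL.mono_left (nhdsWithin_mono _ inter_subset_right))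
    obtain ⟨B, hB, hBb⟩ : ∃ s ∈ 𝓝[Icc (0:ℝ) 1 ∩ Ioi t] t, Bornology.IsBounded (h '' s) := by
      rcases ht.2.eq_or_lt with h0 | h0
      · refine ⟨∅, ?_, by simp⟩
        have : Icc (0:ℝ) 1 ∩ Ioi t = ∅ := by
          ext u
          simp only [mem_inter_iff, mem_Icc, mem_Ioi, mem_empty_iff_false, iff_false]
          intro hu
          linarith [hu.1.2, hu.2]
        simp [this]
      · exact key ((hc.1 t ⟨ht.1, h0⟩).mono_left (nhdsWithin_mono _ inter_subset_right))
    refine ⟨A ∪ B ∪ {t}, ?_, ?_⟩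
    · have hsub : Icc (0:ℝ) 1 ⊆ Icc (0:ℝ) 1 ∩ Iio t ∪ Icc (0:ℝ) 1 ∩ Ioi t ∪ {t} := by
        intro u hu
        rcases lt_trichotomy u t with h1 | h1 | h1
        · exact Or.inl (Or.inl ⟨hu, h1⟩)
        · exact Or.inr h1
        · exact Or.inl (Or.inr ⟨hu, h1⟩)
      refine nhdsWithin_mono t hsub ?_
      rw [nhdsWithin_union, nhdsWithin_union]
      refine union_mem_sup (union_mem_sup hA hB) ?_
      simp
    · rw [image_union, image_union, image_singleton]
      exact (hAb.union hBb).union Bornology.isBounded_singleton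
  obtain ⟨R, hR⟩ := hb.subset_closedBall 0
  exact ⟨R, fun t ht => hR (mem_image_of_mem _ ht)⟩

lemma isBounded_cGraph {d : ℕ} {h : ℝ → EuclideanSpace ℝ (Fin d)} (hc : Cadlag01 h) :
    Bornology.IsBounded (cGraph h) := by
  obtain ⟨R, hR⟩ := hc.exists_bound
  refine isBounded_iff_forall_norm_le.2 ⟨√(1 ^ 2 + R ^ 2), ?_⟩
  rintro p ⟨t, ht, x, hx, rfl⟩
  have h1 : x ∈ closedBall (0 : EuclideanSpace ℝ (Fin d)) R :=
    segment_subset_closedBall hc ht (a := t - 1) (b := t + 1) ⟨by linarith, by linarith⟩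
      (fun u hu _ => hR u hu) hx
  rw [mem_closedBall_zero_iff] at h1
  rw [WithLp.prod_norm_eq_of_L2]
  have h2 : ‖t‖ ≤ 1 := by rw [Real.norm_of_nonneg ht.1]; exact ht.2
  refine Real.sqrt_le_sqrt (add_le_add ?_ ?_)
  · exact pow_le_pow_left₀ (norm_nonneg _) h2 2
  · exact pow_le_pow_left₀ (norm_nonneg _) h1 2

lemma mem_cGraph_self {d : ℕ} (h : ℝ → EuclideanSpace ℝ (Fin d)) {t : ℝ}
    (ht : t ∈ Icc (0:ℝ) 1) : gPoint t (h t) ∈ cGraph h :=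
  ⟨t, ht, h t, right_mem_segment _ _ _, rfl⟩

lemma hausdorffEDist_cGraph_ne_top {d : ℕ} {g h : ℝ → EuclideanSpace ℝ (Fin d)}
    (gc : Cadlag01 g) (hc : Cadlag01 h) : hausdorffEDist (cGraph g) (cGraph h) ≠ ⊤ :=
  hausdorffEDist_ne_top_of_nonempty_of_bounded
    ⟨_, mem_cGraph_self g (t := 0) (by simp)⟩ ⟨_, mem_cGraph_self h (t := 0) (by simp)⟩
    (isBounded_cGraph gc) (isBounded_cGraph hc)

/-- The cumulative variation of `h` on `[0,1]` up to time `s`, defined for every real `s`: it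
vanishes for `s < 0` and is the total variation for `s ≥ 1`. -/
def cumVar {E : Type*} [PseudoEMetricSpace E] (h : ℝ → E) (s : ℝ) : ℝ :=
  (eVariationOn h (Icc (0:ℝ) 1 ∩ Iic s)).toReal

section cumVar

variable {E : Type*} [PseudoMetricSpace E] {h : ℝ → E}

lemma cumVar_mono (hBV : eVariationOn h (Icc (0:ℝ) 1) ≠ ⊤) : Monotone (cumVar h) := fun _ _ hab =>
  ENNReal.toReal_mono (ne_top_of_le_ne_top hBV (eVariationOn.mono h inter_subset_left))
    (eVariationOn.mono h (inter_subset_inter_right _ (Iic_subset_Iic.2 hab)))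

lemma cumVar_le (hBV : eVariationOn h (Icc (0:ℝ) 1) ≠ ⊤) (s : ℝ) :
    cumVar h s ≤ (eVariationOn h (Icc (0:ℝ) 1)).toReal :=
  ENNReal.toReal_mono hBV (eVariationOn.mono h inter_subset_left)

lemma dist_le_cumVar_sub (hBV : eVariationOn h (Icc (0:ℝ) 1) ≠ ⊤) {a b p q : ℝ} (hab : a ≤ b)
    (hp : p ∈ Icc (0:ℝ) 1) (hq : q ∈ Icc (0:ℝ) 1) (hp' : p ∈ Icc a b) (hq' : q ∈ Icc a b) :
    dist (h p) (h q) ≤ cumVar h b - cumVar h a := by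
  have key : eVariationOn h (Icc (0:ℝ) 1 ∩ Iic a) + edist (h p) (h q) ≤
      eVariationOn h (Icc (0:ℝ) 1 ∩ Iic b) := by
    calc _ ≤ eVariationOn h (Icc (0:ℝ) 1 ∩ Iic a) + eVariationOn h (Icc (0:ℝ) 1 ∩ Icc a b) := by
          gcongr
          exact eVariationOn.edist_le h ⟨hp, hp'⟩ ⟨hq, hq'⟩
      _ ≤ eVariationOn h (Icc (0:ℝ) 1 ∩ Iic a ∪ Icc (0:ℝ) 1 ∩ Icc a b) :=
          eVariationOn.add_le_union h fun x hx y hy => le_trans hx.2 hy.2.1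
      _ ≤ _ := eVariationOn.mono h (union_subset
          (inter_subset_inter_right _ (Iic_subset_Iic.2 hab))
          (inter_subset_inter_right _ Icc_subset_Iic_self))
  have hfin : ∀ s, eVariationOn h (Icc (0:ℝ) 1 ∩ Iic s) ≠ ⊤ := fun s =>
    ne_top_of_le_ne_top hBV (eVariationOn.mono h inter_subset_left)
  have := ENNReal.toReal_mono (hfin b) key
  rw [ENNReal.toReal_add (hfin a) (edist_ne_top _ _), ← dist_edist] at this
  unfold cumVar
  linarith

end cumVar

/-- The integral of the increment of a monotone function over a window of width `2ρ` is at most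
`2ρ` times the oscillation of the function. -/
lemma integral_shift_sub_le {W : ℝ → ℝ} (hW : Monotone W) (h0 : ∀ s, 0 ≤ W s) {V : ℝ}
    (hV : ∀ s, W s ≤ V) {ρ : ℝ} (hρ : 0 ≤ ρ) :
    ∫ s in (0:ℝ)..1, (W (s + ρ) - W (s - ρ)) ≤ 2 * ρ * V := by
  have hi : ∀ a b, IntervalIntegrable W volume a b := fun a b => hW.intervalIntegrable
  have hp : Monotone fun s => W (s + ρ) := fun a b hab => hW (by linarith)
  have hm : Monotone fun s => W (s - ρ) := fun a b hab => hW (by linarith)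
  rw [intervalIntegral.integral_sub hp.intervalIntegrable hm.intervalIntegrable,
    intervalIntegral.integral_comp_add_right, intervalIntegral.integral_comp_sub_right,
    intervalIntegral.integral_interval_sub_interval_comm' (hi _ _) (hi _ _) (hi _ _)]
  have h1 : ∫ s in (1 - ρ)..(1 + ρ), W s ≤ ∫ _ in (1 - ρ)..(1 + ρ), V :=
    intervalIntegral.integral_mono (by linarith) (hi _ _) intervalIntegrable_const hV
  have h2 : 0 ≤ ∫ s in (0 - ρ)..(0 + ρ), W s :=
    intervalIntegral.integral_nonneg (by linarith) fun s _ => h0 s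
  rw [intervalIntegral.integral_const, smul_eq_mul] at h1
  linarith

/-- The key pointwise estimate: a point of `Γh` close to `(s, g s)` lies over `(s - ρ, s + ρ)`, where `h`
moves away from `h s` by at most the increment of the cumulative variation. -/
lemma norm_sub_le_of_hausdorffDist_lt {d : ℕ} {g h : ℝ → EuclideanSpace ℝ (Fin d)}
    (hc : Cadlag01 h) (gc : Cadlag01 g) (hBV : eVariationOn h (Icc (0:ℝ) 1) ≠ ⊤) {ρ : ℝ}
    (hρ : hausdorffDist (cGraph g) (cGraph h) < ρ) {s : ℝ} (hs : s ∈ Icc (0:ℝ) 1) :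
    ‖g s - h s‖ ≤ ρ + (cumVar h (s + ρ) - cumVar h (s - ρ)) := by
  have hρ0 : 0 < ρ := hausdorffDist_nonneg.trans_lt hρ
  obtain ⟨p, ⟨t, ht, x, hx, rfl⟩, hp⟩ := exists_dist_lt_of_hausdorffDist_lt
    (mem_cGraph_self g hs) hρ (hausdorffEDist_cGraph_ne_top gc hc)
  rw [WithLp.prod_dist_eq_of_L2] at hp
  change √(dist s t ^ 2 + dist (g s) x ^ 2) < ρ at hp
  have hst : dist s t < ρ :=
    (Real.le_sqrt_of_sq_le (le_add_of_nonneg_right (sq_nonneg _))).trans_lt hp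
  have hgx : dist (g s) x < ρ :=
    (Real.le_sqrt_of_sq_le (le_add_of_nonneg_left (sq_nonneg _))).trans_lt hp
  rw [Real.dist_eq, abs_lt] at hst
  have hxs : x ∈ closedBall (h s) (cumVar h (s + ρ) - cumVar h (s - ρ)) :=
    segment_subset_closedBall hc ht (a := s - ρ) (b := s + ρ)
      ⟨by linarith, by linarith⟩
      (fun u hu hu' => dist_le_cumVar_sub hBV (by linarith) hu hs ⟨hu'.1.le, hu'.2.le⟩
        ⟨by linarith, by linarith⟩) hx
  rw [← dist_eq_norm]
  exact (dist_triangle _ x _).trans (add_le_add hgx.le hxs)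

/-- The `L¹`-distance between two càdlàg functions on `[0,1]` is controlled by the Hausdorff
distance `r = ρ₂(g,h)` between their completed graphs:
`∫₀¹ |g - h| ≤ 2 d (V + 1) r + π d r²`, where `V` is the total variation of `h`. -/
theorem integral_dist_le_of_hausdorffDist_graphs
    {d : ℕ} (hd : 1 ≤ d)
    (h g : ℝ → EuclideanSpace ℝ (Fin d))
    (hcadlag : Cadlag01 h) (gcadlag : Cadlag01 g)
    (hBV : eVariationOn h (Icc (0:ℝ) 1) ≠ ⊤) :
    (∫ s in Icc (0:ℝ) 1, ‖g s - h s‖) ≤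
      2 * d * ((eVariationOn h (Icc (0:ℝ) 1)).toReal + 1) *
          Metric.hausdorffDist (cGraph g) (cGraph h) +
        Real.pi * d * Metric.hausdorffDist (cGraph g) (cGraph h) ^ 2 := by
  set V := (eVariationOn h (Icc (0:ℝ) 1)).toReal with hVdef
  set r := hausdorffDist (cGraph g) (cGraph h) with hr
  have hr0 : 0 ≤ r := hausdorffDist_nonneg
  have hV0 : 0 ≤ V := ENNReal.toReal_nonneg
  have bound : ∀ ρ, r < ρ → (∫ s in Icc (0:ℝ) 1, ‖g s - h s‖) ≤ (1 + 2 * V) * ρ := by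
    intro ρ hρ
    have hp : Monotone fun s => cumVar h (s + ρ) := fun a b hab =>
      cumVar_mono hBV (by linarith)
    have hm : Monotone fun s => cumVar h (s - ρ) := fun a b hab =>
      cumVar_mono hBV (by linarith)
    have hInt : IntervalIntegrable (fun s => cumVar h (s + ρ) - cumVar h (s - ρ)) volume 0 1 :=
      hp.intervalIntegrable.sub hm.intervalIntegrable
    have hInt' : IntervalIntegrable
        (fun s => ρ + (cumVar h (s + ρ) - cumVar h (s - ρ))) volume 0 1 :=
      intervalIntegrable_const.add hInt
    -- Only the majorant has to be integrable, so measurability of `g` and `h` plays no role.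
    calc (∫ s in Icc (0:ℝ) 1, ‖g s - h s‖)
        ≤ ∫ s in Icc (0:ℝ) 1, (ρ + (cumVar h (s + ρ) - cumVar h (s - ρ))) := by
          refine integral_mono_of_nonneg (ae_of_all _ fun s => norm_nonneg _)
            ((intervalIntegrable_iff_integrableOn_Icc_of_le zero_le_one).1 hInt') ?_
          filter_upwards [ae_restrict_mem measurableSet_Icc] with s hs
          exact norm_sub_le_of_hausdorffDist_lt hcadlag gcadlag hBV hρ hs
      _ = ρ + ∫ s in (0:ℝ)..1, (cumVar h (s + ρ) - cumVar h (s - ρ)) := by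
          rw [integral_Icc_eq_integral_Ioc, ← intervalIntegral.integral_of_le zero_le_one,
            intervalIntegral.integral_add intervalIntegrable_const hInt]
          simp
      _ ≤ ρ + 2 * ρ * V := by
          gcongr
          exact integral_shift_sub_le (cumVar_mono hBV) (fun _ => ENNReal.toReal_nonneg)
            (cumVar_le hBV) (hr0.trans hρ.le)
      _ = (1 + 2 * V) * ρ := by ring
  have hlim : (∫ s in Icc (0:ℝ) 1, ‖g s - h s‖) ≤ (1 + 2 * V) * r := by
    have ht : Tendsto (fun ρ : ℝ => (1 + 2 * V) * ρ) (𝓝[>] r) (𝓝 ((1 + 2 * V) * r)) :=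
      ((continuous_const.mul continuous_id).tendsto r).mono_left nhdsWithin_le_nhds
    refine ge_of_tendsto ht ?_
    filter_upwards [self_mem_nhdsWithin] with ρ hρ using bound ρ hρ
  have hd' : (1:ℝ) ≤ d := by exact_mod_cast hd
  have h1 : (1 + 2 * V) * r ≤ 2 * d * (V + 1) * r := by
    refine mul_le_mul_of_nonneg_right ?_ hr0
    nlinarith
  have h2 : 0 ≤ Real.pi * d * r ^ 2 := by positivity
  linarith
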